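/- arXiv:2406.00906 — 2 statements merged into one kernel-verified Lean document; each statement's English description precedes it below -/
import Mathlib

section
/- Consider the one-dimensional model $Y\mid\beta \sim N(\beta,1)$ with prior $\nu(\beta \mid \lambda, \alpha) = \frac{\alpha\lambda^{1/\alpha}}{2^{1/\alpha+1}\Gamma(1/\alpha)} e^{-\frac{\lambda}{2}|\beta|^{\alpha}}$, $\lambda \sim \mathrm{Gamma}(e, f)$ (shape-rate), and $\alpha \sim \mathrm{Unif}(k_1, k_2)$ with $0 < k_1 \le 1 \le 2 \le k_2 \le 4$. Let $m(y)$ be the marginal density of $Y$. Then $\lim_{|y|\to\infty} \frac{d}{dy}\log m(y) = 0$, and consequently the posterior mean satisfies $|y - \mathbb{E}(\beta\mid y)| \to 0$ as $|y|\to\infty$. -/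
open MeasureTheory Filter

theorem integrable_one_add_abs_pow_mul_gaussian {b : ℝ} (hb : 0 < b) (N k : ℕ) :
    Integrable fun u : ℝ => (1 + |u|) ^ N * (|u| ^ k * Real.exp (-b * u ^ 2)) := by
  induction N generalizing k with
  | zero =>
    have h := (integrable_rpow_mul_exp_neg_mul_sq hb (s := (k : ℝ))
      (by have := Nat.cast_nonneg (α := ℝ) k; linarith)).norm
    refine h.congr (Eventually.of_forall fun u => ?_)
    simp
  | succ N ih =>
    refine ((ih k).add (ih (k + 1))).congr (Eventually.of_forall fun u => ?_)
    simp only [Pi.add_apply]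
    ring

section Tail

variable {q : ℝ → ℝ} {N : ℕ} {K : ℝ} {l : Filter ℝ}

theorem le_one_add_abs_pow_mul (hpos : ∀ x, 0 < q x)
    (hs : ∀ s y z, 1 ≤ s → |y| ≤ s * |z| → q z ≤ s ^ N * q y) (hK : ∀ z, q z ≤ K * q 1)
    (y u : ℝ) : q (y + u) ≤ K * (1 + |u|) ^ N * q y := by
  have hK1 : 1 ≤ K := by
    have h1 := hK 1
    have h2 := hpos 1
    by_contra! h
    nlinarith
  have hu := abs_nonneg u
  have htri : |y| ≤ |y + u| + |u| := by
    simpa using abs_sub (y + u) u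
  rcases le_total 1 |y + u| with h | h
  · calc q (y + u) ≤ (1 + |u|) ^ N * q y := hs _ _ _ (by linarith) (by nlinarith)
      _ ≤ K * ((1 + |u|) ^ N * q y) := le_mul_of_one_le_left
          (mul_nonneg (by positivity) (hpos y).le) hK1
      _ = _ := by ring
  · calc q (y + u) ≤ K * q 1 := hK _
      _ ≤ K * ((1 + |u|) ^ N * q y) := by
          gcongr
          exact hs _ _ _ (by linarith) (by rw [abs_one]; linarith)
      _ = _ := by ring

theorem tendsto_shift_ratio (hl : Tendsto (fun y : ℝ => |y|) l atTop) (hpos : ∀ x, 0 < q x)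
    (hs : ∀ s y z, 1 ≤ s → |y| ≤ s * |z| → q z ≤ s ^ N * q y) (u : ℝ) :
    Tendsto (fun y => q (y + u) / q y) l (nhds 1) := by
  have hl' : Tendsto (fun y : ℝ => |y + u|) l atTop := by
    refine tendsto_atTop_mono (fun y => ?_) (tendsto_atTop_add_const_right l (-|u|) hl)
    have : |y| ≤ |y + u| + |u| := by simpa using abs_sub (y + u) u
    linarith
  have aux : ∀ {φ : ℝ → ℝ}, Tendsto φ l atTop →
      Tendsto (fun y => (1 + |u| / φ y) ^ N) l (nhds 1) := fun h => by
    simpa using ((h.const_div_atTop |u|).const_add 1).pow N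
  have hlow : Tendsto (fun y => ((1 + |u| / |y|) ^ N)⁻¹) l (nhds 1) := by
    simpa using (aux hl).inv₀ one_ne_zero
  refine tendsto_of_tendsto_of_tendsto_of_le_of_le' hlow (aux hl') ?_ ?_
  · filter_upwards [hl.eventually_gt_atTop 0] with y hy
    have hle : q y ≤ (1 + |u| / |y|) ^ N * q (y + u) := by
      refine hs _ _ _ (le_add_of_nonneg_right (by positivity)) ?_
      rw [add_mul, one_mul, div_mul_cancel₀ _ hy.ne']
      exact abs_add_le y u
    rw [le_div_iff₀ (hpos y), inv_mul_le_iff₀ (by positivity)]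
    exact hle
  · filter_upwards [hl'.eventually_gt_atTop 0] with y hy
    rw [div_le_iff₀ (hpos y)]
    refine hs _ _ _ (le_add_of_nonneg_right (by positivity)) ?_
    rw [add_mul, one_mul, div_mul_cancel₀ _ hy.ne']
    simpa using abs_sub (y + u) u

theorem tendsto_integral_mul_shift_ratio [l.IsCountablyGenerated]
    (hl : Tendsto (fun y : ℝ => |y|) l atTop) (hc : Continuous q) (hpos : ∀ x, 0 < q x)
    (hs : ∀ s y z, 1 ≤ s → |y| ≤ s * |z| → q z ≤ s ^ N * q y) (hK : ∀ z, q z ≤ K * q 1)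
    {h : ℝ → ℝ} (hh : Continuous h) (hint : Integrable fun u => (1 + |u|) ^ N * |h u|) :
    Tendsto (fun y => ∫ u, h u * (q (y + u) / q y)) l (nhds (∫ u, h u)) := by
  refine tendsto_integral_filter_of_dominated_convergence
    (fun u => K * ((1 + |u|) ^ N * |h u|)) ?_ ?_ (hint.const_mul K) ?_
  · exact Eventually.of_forall fun y => by fun_prop
  · refine Eventually.of_forall fun y => Eventually.of_forall fun u => ?_
    rw [Real.norm_eq_abs, abs_mul, abs_of_pos (div_pos (hpos _) (hpos _))]
    have : q (y + u) / q y ≤ K * (1 + |u|) ^ N := by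
      rw [div_le_iff₀ (hpos y)]
      exact le_one_add_abs_pow_mul hpos hs hK y u
    calc |h u| * (q (y + u) / q y) ≤ |h u| * (K * (1 + |u|) ^ N) := by gcongr
      _ = _ := by ring
  · refine Eventually.of_forall fun u => ?_
    simpa using (tendsto_shift_ratio hl hpos hs u).const_mul (h u)

theorem tendsto_gaussian_score [l.IsCountablyGenerated]
    (hl : Tendsto (fun y : ℝ => |y|) l atTop) (hc : Continuous q) (hpos : ∀ x, 0 < q x)
    (hs : ∀ s y z, 1 ≤ s → |y| ≤ s * |z| → q z ≤ s ^ N * q y) (hK : ∀ z, q z ≤ K * q 1) :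
    Tendsto (fun y => (∫ x, (x - y) * (Real.exp (-(x - y) ^ 2 / 2) * q x)) /
      ∫ x, Real.exp (-(x - y) ^ 2 / 2) * q x) l (nhds 0) := by
  have hexp : ∀ u : ℝ, Real.exp (-(1 / 2) * u ^ 2) = Real.exp (-u ^ 2 / 2) := fun u => by
    congr 1; ring
  have hint0 : Integrable fun u : ℝ => (1 + |u|) ^ N * |Real.exp (-u ^ 2 / 2)| := by
    refine (integrable_one_add_abs_pow_mul_gaussian (b := 1 / 2) (by norm_num) N 0).congr
      (Eventually.of_forall fun u => ?_)
    simp only [hexp, pow_zero, one_mul, abs_of_pos (Real.exp_pos _)]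
  have hint1 : Integrable fun u : ℝ => (1 + |u|) ^ N * |u * Real.exp (-u ^ 2 / 2)| := by
    refine (integrable_one_add_abs_pow_mul_gaussian (b := 1 / 2) (by norm_num) N 1).congr
      (Eventually.of_forall fun u => ?_)
    simp only [hexp, pow_one, abs_mul, abs_of_pos (Real.exp_pos _)]
  have h0 := tendsto_integral_mul_shift_ratio hl hc hpos hs hK (by fun_prop) hint0
  have h1 := tendsto_integral_mul_shift_ratio hl hc hpos hs hK (by fun_prop) hint1
  have hodd : ∫ u : ℝ, u * Real.exp (-u ^ 2 / 2) = 0 := by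
    have h := integral_neg_eq_self (fun u : ℝ => u * Real.exp (-u ^ 2 / 2)) volume
    simp only [neg_mul, even_two, Even.neg_pow, integral_neg] at h
    linarith
  have heven : ∫ u : ℝ, Real.exp (-u ^ 2 / 2) ≠ 0 := by
    simp only [← hexp, integral_gaussian]
    positivity
  have hlim := h1.div h0 heven
  rw [hodd, zero_div] at hlim
  refine hlim.congr fun y => ?_
  have e0 : ∫ x, Real.exp (-(x - y) ^ 2 / 2) * q x =
      q y * ∫ u, Real.exp (-u ^ 2 / 2) * (q (y + u) / q y) := by
    rw [← integral_add_left_eq_self _ y, ← integral_const_mul]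
    congr with u
    have := (hpos y).ne'
    rw [add_sub_cancel_left]
    field_simp
  have e1 : ∫ x, (x - y) * (Real.exp (-(x - y) ^ 2 / 2) * q x) =
      q y * ∫ u, u * Real.exp (-u ^ 2 / 2) * (q (y + u) / q y) := by
    rw [← integral_add_left_eq_self _ y, ← integral_const_mul]
    congr with u
    have := (hpos y).ne'
    rw [add_sub_cancel_left]
    field_simp
  rw [e0, e1, mul_div_mul_left _ _ (hpos y).ne', Pi.div_apply]

theorem integrable_sub_pow_mul_gaussian_mul {B : ℝ} (hc : Continuous q) (hB : ∀ x, |q x| ≤ B)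
    (k : ℕ) (y : ℝ) :
    Integrable fun x => (x - y) ^ k * (Real.exp (-(x - y) ^ 2 / 2) * q x) := by
  have h := ((integrable_one_add_abs_pow_mul_gaussian (b := 1 / 2) (by norm_num) 0 k).comp_sub_right
    y).mul_const B
  refine h.mono' (by fun_prop) (Eventually.of_forall fun x => ?_)
  rw [Real.norm_eq_abs, abs_mul, abs_mul, abs_pow, abs_of_pos (Real.exp_pos _), pow_zero, one_mul,
    mul_assoc, show -(1 / 2 : ℝ) * (x - y) ^ 2 = -(x - y) ^ 2 / 2 by ring]
  gcongr
  exact hB x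

theorem hasDerivAt_gaussian_smoothing {B : ℝ} (hc : Continuous q) (hB : ∀ x, |q x| ≤ B) (y : ℝ) :
    HasDerivAt (fun z => ∫ x, Real.exp (-(x - z) ^ 2 / 2) * q x)
      (∫ x, (x - y) * (Real.exp (-(x - y) ^ 2 / 2) * q x)) y := by
  have hbound : Integrable fun x : ℝ =>
      (1 + |x - y|) ^ 1 * (|x - y| ^ 0 * Real.exp (-(1 / 4) * (x - y) ^ 2)) *
        (Real.exp (1 / 2) * B) :=
    ((integrable_one_add_abs_pow_mul_gaussian (b := 1 / 4) (by norm_num) 1 0).comp_sub_right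
      y).mul_const _
  refine (hasDerivAt_integral_of_dominated_loc_of_deriv_le
    (F' := fun z x => (x - z) * (Real.exp (-(x - z) ^ 2 / 2) * q x))
    (Metric.ball_mem_nhds y one_pos) (Eventually.of_forall fun z => by fun_prop) ?_
    (by fun_prop) ?_ hbound ?_).2
  · simpa using integrable_sub_pow_mul_gaussian_mul hc hB 0 y
  · refine Eventually.of_forall fun x z hz => ?_
    rw [Metric.mem_ball, Real.dist_eq] at hz
    have hz2 : (z - y) ^ 2 ≤ 1 := by
      rw [← sq_abs]; nlinarith [abs_nonneg (z - y)]
    have h1 : |x - z| ≤ 1 + |x - y| := by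
      have := abs_sub (x - y) (z - y)
      rw [sub_sub_sub_cancel_right] at this
      linarith
    have h2 : Real.exp (-(x - z) ^ 2 / 2) ≤
        Real.exp (-(1 / 4) * (x - y) ^ 2) * Real.exp (1 / 2) := by
      rw [← Real.exp_add]
      refine Real.exp_le_exp.2 ?_
      nlinarith [sq_nonneg (x - y - 2 * (z - y))]
    rw [Real.norm_eq_abs, abs_mul, abs_mul, abs_of_pos (Real.exp_pos _)]
    calc |x - z| * (Real.exp (-(x - z) ^ 2 / 2) * |q x|)
        ≤ (1 + |x - y|) * ((Real.exp (-(1 / 4) * (x - y) ^ 2) * Real.exp (1 / 2)) * B) := by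
          gcongr
          exact hB x
      _ = _ := by ring
  · refine Eventually.of_forall fun x z _ => ?_
    have h : HasDerivAt (fun z : ℝ => -(x - z) ^ 2 / 2) (x - z) z := by
      refine HasDerivAt.congr_deriv
        ((((hasDerivAt_id' z).const_sub x).fun_pow 2).fun_neg.div_const 2) ?_
      simp
    exact (h.exp.mul_const (q x)).congr_deriv (by ring)

end Tail

section Mixture

variable {P : ℝ → ℝ → ℝ} {a b B : ℝ}

theorem continuous_integral_mixture (hab : a ≤ b)
    (hP : ContinuousOn (Function.uncurry P) (Set.Icc a b ×ˢ Set.univ))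
    (hB : ∀ α ∈ Set.Icc a b, ∀ x, |P α x| ≤ B) :
    Continuous fun x => ∫ α in a..b, P α x := by
  have hsub : Set.uIoc a b ⊆ Set.Icc a b := by
    rw [Set.uIoc_of_le hab]; exact Set.Ioc_subset_Icc_self
  refine intervalIntegral.continuous_of_dominated_interval (bound := fun _ => B)
    (fun x => ?_) (fun x => Eventually.of_forall fun α hα => hB α (hsub hα) x)
    intervalIntegrable_const (Eventually.of_forall fun α hα => ?_)
  · have : ContinuousOn (fun α => P α x) (Set.Icc a b) :=
      hP.comp (f := fun α => (α, x)) (by fun_prop) fun α hα => ⟨hα, trivial⟩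
    exact (this.mono hsub).aestronglyMeasurable measurableSet_uIoc
  · exact continuousOn_univ.1 <|
      hP.comp (f := fun x => (α, x)) (by fun_prop) fun x _ => ⟨hsub hα, trivial⟩

theorem integral_mixture_swap (hab : a ≤ b)
    (hP : ContinuousOn (Function.uncurry P) (Set.Icc a b ×ˢ Set.univ))
    (hB : ∀ α ∈ Set.Icc a b, ∀ x, |P α x| ≤ B) {h : ℝ → ℝ} (hh : Integrable h) :
    ∫ α in a..b, ∫ x, h x * P α x = ∫ x, h x * ∫ α in a..b, P α x := by
  simp only [intervalIntegral.integral_of_le hab, ← integral_const_mul]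
  refine integral_integral_swap ?_
  have hint : Integrable (fun z : ℝ × ℝ => h z.2)
      ((volume.restrict (Set.Ioc a b)).prod volume) := hh.comp_snd _
  have hrestr : (volume.restrict (Set.Ioc a b)).prod (volume : Measure ℝ) =
      (volume.prod volume).restrict (Set.Ioc a b ×ˢ Set.univ) := by
    rw [← Measure.prod_restrict, Measure.restrict_univ]
  have hmeas : MeasurableSet (Set.Ioc a b ×ˢ (Set.univ : Set ℝ)) :=
    measurableSet_Ioc.prod MeasurableSet.univ
  have hsub : Set.Ioc a b ×ˢ (Set.univ : Set ℝ) ⊆ Set.Icc a b ×ˢ Set.univ :=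
    Set.prod_mono Set.Ioc_subset_Icc_self subset_rfl
  refine hint.mul_bdd (c := B) ?_ ?_
  · rw [hrestr]
    exact (hP.mono hsub).aestronglyMeasurable hmeas
  · rw [hrestr]
    filter_upwards [ae_restrict_mem hmeas] with z hz
    exact hB z.1 (hsub hz).1 z.2

end Mixture

section Kernel

variable {w : ℝ → ℝ} {e f k1 k2 : ℝ}

theorem continuousOn_bridge_kernel (hf : 0 < f) (hk1 : 0 < k1)
    (hw : ContinuousOn w (Set.Icc k1 k2)) :
    ContinuousOn (Function.uncurry fun α x : ℝ => w α / (|x| ^ α / 2 + f) ^ (e + 1 / α))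
      (Set.Icc k1 k2 ×ˢ Set.univ) := by
  have hα : ∀ z ∈ Set.Icc k1 k2 ×ˢ (Set.univ : Set ℝ), 0 < z.1 := fun z hz =>
    hk1.trans_le hz.1.1
  have hg : ∀ z : ℝ × ℝ, 0 < |z.2| ^ z.1 / 2 + f := fun z => by positivity
  have hpow : ContinuousOn (fun z : ℝ × ℝ => |z.2| ^ z.1) (Set.Icc k1 k2 ×ˢ Set.univ) :=
    ContinuousOn.rpow (by fun_prop) (by fun_prop) fun z hz => Or.inr (hα z hz)
  have hexp : ContinuousOn (fun z : ℝ × ℝ => e + 1 / z.1) (Set.Icc k1 k2 ×ˢ Set.univ) :=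
    continuousOn_const.add (continuousOn_const.div (by fun_prop) fun z hz => (hα z hz).ne')
  refine ContinuousOn.div (hw.comp (by fun_prop) fun z hz => hz.1) ?_
    fun z _ => (Real.rpow_pos_of_pos (hg z) _).ne'
  exact ((hpow.div_const 2).add continuousOn_const).rpow hexp fun z _ => Or.inl (hg z).ne'

theorem bridge_kernel_le (hf : 0 < f) {α : ℝ} (hw : 0 ≤ w α) {t y z : ℝ} {n : ℕ} (ht : 1 ≤ t)
    (he : 0 ≤ e + 1 / α) (hn : e + 1 / α ≤ n)
    (h : |y| ^ α / 2 + f ≤ t * (|z| ^ α / 2 + f)) :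
    w α / (|z| ^ α / 2 + f) ^ (e + 1 / α) ≤ t ^ n * (w α / (|y| ^ α / 2 + f) ^ (e + 1 / α)) := by
  have hy : 0 < |y| ^ α / 2 + f := by positivity
  have hz : 0 < |z| ^ α / 2 + f := by positivity
  have key : (|y| ^ α / 2 + f) ^ (e + 1 / α) ≤ t ^ n * (|z| ^ α / 2 + f) ^ (e + 1 / α) := by
    calc (|y| ^ α / 2 + f) ^ (e + 1 / α) ≤ (t * (|z| ^ α / 2 + f)) ^ (e + 1 / α) := by gcongr
      _ = t ^ (e + 1 / α) * (|z| ^ α / 2 + f) ^ (e + 1 / α) :=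
          Real.mul_rpow (by linarith) hz.le
      _ ≤ t ^ n * (|z| ^ α / 2 + f) ^ (e + 1 / α) := by
          gcongr
          rw [← Real.rpow_natCast]
          exact Real.rpow_le_rpow_of_exponent_le ht hn
  rw [← mul_div_assoc, div_le_div_iff₀ (by positivity) (by positivity)]
  calc w α * (|y| ^ α / 2 + f) ^ (e + 1 / α)
      ≤ w α * (t ^ n * (|z| ^ α / 2 + f) ^ (e + 1 / α)) := by gcongr
    _ = _ := by ring

theorem bridge_scale_le (hf : 0 < f) {α s y z : ℝ} (hα : 0 < α) (hα4 : α ≤ 4) (hs : 1 ≤ s)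
    (h : |y| ≤ s * |z|) : |y| ^ α / 2 + f ≤ s ^ 4 * (|z| ^ α / 2 + f) := by
  have h1 : |y| ^ α ≤ s ^ 4 * |z| ^ α := by
    calc |y| ^ α ≤ (s * |z|) ^ α := by gcongr
      _ = s ^ α * |z| ^ α := Real.mul_rpow (by linarith) (abs_nonneg z)
      _ ≤ s ^ 4 * |z| ^ α := by
          gcongr
          exact_mod_cast Real.rpow_le_rpow_of_exponent_le hs hα4
  have h2 : f ≤ s ^ 4 * f := le_mul_of_one_le_left hf.le (one_le_pow₀ hs)
  linarith

theorem bridge_bounded_le (hf : 0 < f) (α z : ℝ) :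
    |(1 : ℝ)| ^ α / 2 + f ≤ (1 + 1 / (2 * f)) * (|z| ^ α / 2 + f) := by
  have hz : 0 ≤ |z| ^ α := by positivity
  calc |(1 : ℝ)| ^ α / 2 + f = (1 + 1 / (2 * f)) * f := by
        rw [abs_one, Real.one_rpow]; field_simp; ring
    _ ≤ _ := by gcongr; linarith

end Kernel

theorem continuousOn_bridge_weight {e f k1 k2 : ℝ} (he : 0 < e) (hk1 : 0 < k1) :
    ContinuousOn (fun α : ℝ => α / (2 ^ (1 / α + 1) * Real.Gamma (1 / α)) *
      (f ^ e / Real.Gamma e) * Real.Gamma (e + 1 / α) / Real.sqrt (2 * Real.pi))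
      (Set.Icc k1 k2) := by
  have hα : ∀ α ∈ Set.Icc k1 k2, 0 < α := fun α h => hk1.trans_le h.1
  have hinv : ContinuousOn (fun α : ℝ => 1 / α) (Set.Icc k1 k2) :=
    continuousOn_const.div continuousOn_id fun α h => (hα α h).ne'
  have hΓ := Real.differentiableOn_Gamma_Ioi.continuousOn
  have h1 : ContinuousOn (fun α : ℝ => Real.Gamma (1 / α)) (Set.Icc k1 k2) :=
    hΓ.comp hinv fun α h => one_div_pos.2 (hα α h)
  have h2 : ContinuousOn (fun α : ℝ => Real.Gamma (e + 1 / α)) (Set.Icc k1 k2) :=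
    hΓ.comp (continuousOn_const.add hinv) fun α h => add_pos he (one_div_pos.2 (hα α h))
  have h3 : ContinuousOn (fun α : ℝ => (2 : ℝ) ^ (1 / α + 1)) (Set.Icc k1 k2) :=
    continuousOn_const.rpow (hinv.add continuousOn_const) fun _ _ => Or.inl two_ne_zero
  refine (((continuousOn_id.div (h3.mul h1) fun α h => ?_).mul
    continuousOn_const).mul h2).div_const _
  exact (mul_pos (by positivity) (Real.Gamma_pos_of_pos (one_div_pos.2 (hα α h)))).ne'

theorem gbr_tail_robustness (e f k1 k2 : ℝ) (he : 0 < e) (hf : 0 < f)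
    (hk1 : 0 < k1) (hk1' : k1 ≤ 1) (hk2 : 2 ≤ k2) (hk2' : k2 ≤ 4)
    (m post : ℝ → ℝ)
    (hm : ∀ y, m y = (1/(k2 - k1)) * ∫ α in k1..k2, ∫ β : ℝ,
        Real.exp (-(β - y)^2/2) / Real.sqrt (2 * Real.pi) *
          (α / (2 ^ (1/α + 1) * Real.Gamma (1/α))) *
          (f ^ e / Real.Gamma e) *
          (Real.Gamma (e + 1/α) / (|β| ^ α / 2 + f) ^ (e + 1/α)))
    (hpost : ∀ y, post y = ((1/(k2 - k1)) * ∫ α in k1..k2, ∫ β : ℝ,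
        β * (Real.exp (-(β - y)^2/2) / Real.sqrt (2 * Real.pi) *
          (α / (2 ^ (1/α + 1) * Real.Gamma (1/α))) *
          (f ^ e / Real.Gamma e) *
          (Real.Gamma (e + 1/α) / (|β| ^ α / 2 + f) ^ (e + 1/α)))) / m y) :
    (Tendsto (fun y => deriv (fun z => Real.log (m z)) y) atTop (nhds 0) ∧
     Tendsto (fun y => deriv (fun z => Real.log (m z)) y) atBot (nhds 0)) ∧
    (Tendsto (fun y => |y - post y|) atTop (nhds 0) ∧
     Tendsto (fun y => |y - post y|) atBot (nhds 0)) := by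
  have hk : k1 < k2 := by linarith
  set w : ℝ → ℝ := fun α => α / (2 ^ (1 / α + 1) * Real.Gamma (1 / α)) *
      (f ^ e / Real.Gamma e) * Real.Gamma (e + 1 / α) / Real.sqrt (2 * Real.pi) with hw
  set P : ℝ → ℝ → ℝ := fun α x => w α / (|x| ^ α / 2 + f) ^ (e + 1 / α) with hPdef
  set q : ℝ → ℝ := fun x => ∫ α in k1..k2, P α x with hq
  have hα : ∀ α ∈ Set.Icc k1 k2, 0 < α := fun α h => hk1.trans_le h.1
  have hwpos : ∀ α ∈ Set.Icc k1 k2, 0 < w α := fun α h => by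
    have h0 := hα α h
    have h1 := Real.Gamma_pos_of_pos (one_div_pos.2 h0)
    have h2 := Real.Gamma_pos_of_pos (add_pos he (one_div_pos.2 h0))
    have h3 := Real.Gamma_pos_of_pos he
    positivity
  have hPpos : ∀ α ∈ Set.Icc k1 k2, ∀ x, 0 < P α x := fun α h x => by
    have := hwpos α h
    positivity
  have hPc : ContinuousOn (Function.uncurry P) (Set.Icc k1 k2 ×ˢ Set.univ) :=
    continuousOn_bridge_kernel hf hk1 (continuousOn_bridge_weight he hk1)
  have hPx : ∀ x, ContinuousOn (fun α => P α x) (Set.Icc k1 k2) := fun x =>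
    hPc.comp (f := fun α => (α, x)) (by fun_prop) fun α h => ⟨h, trivial⟩
  have hPi : ∀ x, IntervalIntegrable (fun α => P α x) volume k1 k2 := fun x =>
    (hPx x).intervalIntegrable_of_Icc hk.le
  obtain ⟨n, hn⟩ := exists_nat_ge (e + 1 / k1)
  have hE0 : ∀ α ∈ Set.Icc k1 k2, 0 ≤ e + 1 / α := fun α h => by
    have := hα α h
    positivity
  have hEn : ∀ α ∈ Set.Icc k1 k2, e + 1 / α ≤ n := fun α h =>
    (add_le_add_right (one_div_le_one_div_of_le hk1 h.1) e).trans hn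
  set t : ℝ := 1 + 1 / (2 * f) with ht
  have ht1 : 1 ≤ t := le_add_of_nonneg_right (by positivity)
  have hP1 : ∀ α ∈ Set.Icc k1 k2, ∀ x, P α x ≤ t ^ n * P α 1 := fun α h x =>
    bridge_kernel_le hf (hwpos α h).le ht1 (hE0 α h) (hEn α h) (bridge_bounded_le hf α x)
  obtain ⟨B, hB⟩ : ∃ B, ∀ α ∈ Set.Icc k1 k2, ∀ x, |P α x| ≤ B := by
    obtain ⟨C, hC⟩ := isCompact_Icc.exists_bound_of_continuousOn (hPx 1)
    refine ⟨t ^ n * C, fun α h x => ?_⟩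
    rw [abs_of_pos (hPpos α h x)]
    refine (hP1 α h x).trans ?_
    gcongr
    exact (le_abs_self _).trans (hC α h)
  have hqc : Continuous q := continuous_integral_mixture hk.le hPc hB
  have hqpos : ∀ x, 0 < q x := fun x =>
    intervalIntegral.intervalIntegral_pos_of_pos_on (hPi x)
      (fun α h => hPpos α (Set.Ioo_subset_Icc_self h) x) hk
  have hqs : ∀ s y z, 1 ≤ s → |y| ≤ s * |z| → q z ≤ s ^ (4 * n) * q y := fun s y z hs h => by
    simp only [hq, ← intervalIntegral.integral_const_mul, pow_mul]
    refine intervalIntegral.integral_mono_on hk.le (hPi z) ((hPi y).const_mul _) fun α hα' => ?_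
    exact bridge_kernel_le hf (hwpos α hα').le (one_le_pow₀ hs) (hE0 α hα') (hEn α hα')
      (bridge_scale_le hf (hα α hα') (hα'.2.trans hk2') hs h)
  have hqK : ∀ z, q z ≤ t ^ n * q 1 := fun z => by
    simp only [hq, ← intervalIntegral.integral_const_mul]
    exact intervalIntegral.integral_mono_on hk.le (hPi z) ((hPi 1).const_mul _)
      fun α hα' => hP1 α hα' z
  have hqB : ∀ x, |q x| ≤ t ^ n * q 1 := fun x => by
    rw [abs_of_pos (hqpos x)]
    exact hqK x
  set M : ℝ → ℝ := fun y => ∫ x, Real.exp (-(x - y) ^ 2 / 2) * q x with hM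
  set D : ℝ → ℝ := fun y => ∫ x, (x - y) * (Real.exp (-(x - y) ^ 2 / 2) * q x) with hD
  have hI0 : ∀ y, Integrable fun x => Real.exp (-(x - y) ^ 2 / 2) * q x := fun y => by
    simpa using integrable_sub_pow_mul_gaussian_mul hqc hqB 0 y
  have hI1 : ∀ y, Integrable fun x => (x - y) * (Real.exp (-(x - y) ^ 2 / 2) * q x) := fun y => by
    simpa using integrable_sub_pow_mul_gaussian_mul hqc hqB 1 y
  have hg0 : ∀ y, Integrable fun x : ℝ => Real.exp (-(x - y) ^ 2 / 2) := fun y => by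
    simpa using integrable_sub_pow_mul_gaussian_mul (q := fun _ => 1) continuous_const
      (fun _ => abs_one.le) 0 y
  have hg1 : ∀ y, Integrable fun x : ℝ => x * Real.exp (-(x - y) ^ 2 / 2) := fun y => by
    have := (integrable_sub_pow_mul_gaussian_mul (q := fun _ => 1) continuous_const
      (fun _ => abs_one.le) 1 y).add ((hg0 y).const_mul y)
    refine this.congr (Eventually.of_forall fun x => ?_)
    simp only [Pi.add_apply]
    ring
  have hMpos : ∀ y, 0 < M y := fun y => by
    have hpos : ∀ x, 0 < Real.exp (-(x - y) ^ 2 / 2) * q x := fun x =>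
      mul_pos (Real.exp_pos _) (hqpos x)
    refine (integral_pos_iff_support_of_nonneg (fun x => (hpos x).le) (hI0 y)).2 ?_
    rw [Function.support_eq_univ (fun x => (hpos x).ne')]
    simp
  have hc0 : 0 < 1 / (k2 - k1) := one_div_pos.2 (sub_pos.2 hk)
  have hmM : ∀ y, m y = 1 / (k2 - k1) * M y := fun y => by
    rw [hm, show M y = _ from (integral_mixture_swap hk.le hPc hB (hg0 y)).symm]
    congr! 5 with α x
    simp only [hPdef, hw]
    ring
  have hpostD : ∀ y, post y = y + D y / M y := fun y => by
    have h1 : ∫ α in k1..k2, ∫ β : ℝ,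
        β * (Real.exp (-(β - y)^2/2) / Real.sqrt (2 * Real.pi) *
          (α / (2 ^ (1/α + 1) * Real.Gamma (1/α))) *
          (f ^ e / Real.Gamma e) *
          (Real.Gamma (e + 1/α) / (|β| ^ α / 2 + f) ^ (e + 1/α))) = D y + y * M y := by
      calc _ = ∫ α in k1..k2, ∫ x, x * Real.exp (-(x - y) ^ 2 / 2) * P α x := by
            congr! 4 with α x
            simp only [hPdef, hw]
            ring
        _ = ∫ x, x * Real.exp (-(x - y) ^ 2 / 2) * q x :=
            integral_mixture_swap hk.le hPc hB (hg1 y)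
        _ = D y + y * M y := by
            rw [hD, hM, ← integral_const_mul, ← integral_add (hI1 y) ((hI0 y).const_mul y)]
            congr with x
            ring
    have := (hMpos y).ne'
    rw [hpost, h1, hmM, mul_div_mul_left _ _ hc0.ne']
    field_simp
    ring
  have hderiv : ∀ y, deriv (fun z => Real.log (m z)) y = D y / M y := fun y => by
    have h : HasDerivAt m (1 / (k2 - k1) * D y) y := by
      rw [funext hmM]
      exact (hasDerivAt_gaussian_smoothing hqc hqB y).const_mul _
    have hne : m y ≠ 0 := by
      rw [hmM]
      exact (mul_pos hc0 (hMpos y)).ne'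
    rw [(h.log hne).deriv, hmM, mul_div_mul_left _ _ hc0.ne']
  have hdiff : ∀ y, |y - post y| = |D y / M y| := fun y => by
    rw [hpostD, sub_add_cancel_left, abs_neg]
  have htop : Tendsto (fun y => D y / M y) atTop (nhds 0) :=
    tendsto_gaussian_score tendsto_abs_atTop_atTop hqc hqpos hqs hqK
  have hbot : Tendsto (fun y => D y / M y) atBot (nhds 0) :=
    tendsto_gaussian_score tendsto_abs_atBot_atTop hqc hqpos hqs hqK
  simp only [hderiv, hdiff]
  exact ⟨⟨htop, hbot⟩, by simpa using htop.abs, by simpa using hbot.abs⟩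
end

section
/- Let $\Psi$ be symmetric positive definite $(m \times m)$, $W$ an $n \times m$ matrix, $\gamma > 0$, and $Z \in \mathbb{R}^n$. Suppose $u \sim N(0, \Psi^{-1})$ and $e \sim N(0, I_n)$ are independent, set $v = \frac{1}{\sqrt{\gamma}} W u + e$, let $w$ solve $(\frac{1}{\gamma} W \Psi^{-1} W^\top + I_n) w = \frac{1}{\sqrt{\gamma}} Z - v$, and define $\delta = u + \frac{1}{\sqrt{\gamma}} \Psi^{-1} W^\top w$. Then $\delta \sim N\big((W^\top W + \gamma \Psi)^{-1} W^\top Z,\ \gamma(W^\top W + \gamma\Psi)^{-1}\big)$. -/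
open Matrix MeasureTheory

/-- Multivariate Gaussian measure on `Fin d → ℝ` with mean `μv` and covariance `S`,
defined through its Lebesgue density. -/
noncomputable def mvGaussian {d : ℕ} (μv : Fin d → ℝ) (S : Matrix (Fin d) (Fin d) ℝ) :
    Measure (Fin d → ℝ) :=
  volume.withDensity fun x =>
    ENNReal.ofReal ((2 * Real.pi) ^ (-(d:ℝ)/2) * S.det ^ (-(1:ℝ)/2) *
      Real.exp (-(1/2) * ((x - μv) ⬝ᵥ (S⁻¹ *ᵥ (x - μv)))))

open ProbabilityTheory
open scoped MatrixOrder

/-- The standard Gaussian density on `ℝᵈ` defines the product of standard real Gaussians. -/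
lemma mvGaussian_zero_one_eq_pi (d : ℕ) :
    mvGaussian (0 : Fin d → ℝ) 1 = Measure.pi fun _ : Fin d => gaussianReal 0 1 := by
  have hdens (x : Fin d → ℝ) : (2 * Real.pi) ^ (-(d : ℝ) / 2) *
      (1 : Matrix (Fin d) (Fin d) ℝ).det ^ (-(1 : ℝ) / 2) *
      Real.exp (-(1 / 2) * ((x - 0) ⬝ᵥ ((1 : Matrix (Fin d) (Fin d) ℝ)⁻¹ *ᵥ (x - 0)))) =
      ∏ i, gaussianPDFReal 0 1 (x i) := by
    have hpow : ((2 * Real.pi) ^ (-(d : ℝ) / 2) : ℝ) = (√(2 * Real.pi))⁻¹ ^ d := by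
      rw [Real.sqrt_eq_rpow, ← Real.rpow_neg (by positivity), ← Real.rpow_natCast,
        ← Real.rpow_mul (by positivity)]
      congr 1
      ring
    simp only [gaussianPDFReal_def, Finset.prod_mul_distrib, ← Real.exp_sum, hpow]
    simp only [det_one, Real.one_rpow, mul_one, sub_zero, inv_one, one_mulVec, dotProduct,
      Finset.mul_sum, NNReal.coe_one, Finset.prod_const, Finset.card_univ, Fintype.card_fin]
    congr 2
    exact Finset.sum_congr rfl fun i _ => by ring
  refine (Measure.pi_eq fun s hs => ?_).symm
  rw [mvGaussian, withDensity_apply _ (.univ_pi hs), volume_pi, Measure.restrict_pi_pi]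
  simp_rw [hdens]
  rw [← ofReal_integral_eq_lintegral_ofReal
      (Integrable.fintype_prod fun i => (integrable_gaussianPDFReal 0 1).restrict)
      (ae_of_all _ fun x => Finset.prod_nonneg fun i _ => gaussianPDFReal_nonneg _ _ _),
    integral_fintype_prod_eq_prod,
    ENNReal.ofReal_prod_of_nonneg fun i _ =>
      integral_nonneg fun x => gaussianPDFReal_nonneg _ _ _]
  exact Finset.prod_congr rfl fun i _ =>
    (gaussianReal_apply_eq_integral 0 one_ne_zero (s i)).symm

/-- An invertible affine image of the standard Gaussian is Gaussian. -/
lemma map_mvGaussian_zero_one {d : ℕ} (μv : Fin d → ℝ) {A : Matrix (Fin d) (Fin d) ℝ}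
    (hA : A.det ≠ 0) :
    (mvGaussian 0 1).map (fun x => μv + A *ᵥ x) = mvGaussian μv (A * Aᵀ) := by
  have hmeas : Measurable fun x : Fin d → ℝ => μv + A *ᵥ x := by fun_prop
  have hAu : IsUnit A.det := hA.isUnit
  have hvol : (volume : Measure (Fin d → ℝ)) =
      ENNReal.ofReal |A.det| • volume.map (fun x => μv + A *ᵥ x) := by
    have hcomp : (fun x => μv + A *ᵥ x) = (fun x => μv + x) ∘ toLin' A := by
      ext x; simp
    rw [hcomp, ← Measure.map_map (by fun_prop)
      (LinearMap.continuous_on_pi _).measurable, Real.map_matrix_volume_pi_eq_smul_volume_pi hA,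
      Measure.map_smul, map_add_left_eq_self, smul_smul, ← ENNReal.ofReal_mul (abs_nonneg _),
      ← abs_mul, mul_inv_cancel₀ hA]
    simp
  have hdet : (A * Aᵀ).det ^ (-(1 : ℝ) / 2) = |A.det|⁻¹ := by
    rw [det_mul, det_transpose, ← abs_mul_abs_self, ← pow_two, ← Real.rpow_natCast,
      ← Real.rpow_mul (abs_nonneg _), ← Real.rpow_neg_one]
    norm_num
  have hquad (x : Fin d → ℝ) : (A *ᵥ x) ⬝ᵥ ((A * Aᵀ)⁻¹ *ᵥ (A *ᵥ x)) = x ⬝ᵥ x := by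
    rw [Matrix.mul_inv_rev, mulVec_mulVec, Matrix.mul_assoc, nonsing_inv_mul _ hAu,
      Matrix.mul_one, ← transpose_nonsing_inv, dotProduct_mulVec, vecMul_transpose,
      mulVec_mulVec, nonsing_inv_mul _ hAu, one_mulVec]
  ext s hs
  rw [Measure.map_apply hmeas hs, mvGaussian, mvGaussian, withDensity_apply _ (hmeas hs),
    withDensity_apply _ hs]
  conv_rhs => rw [hvol]
  rw [Measure.restrict_smul, lintegral_smul_measure, setLIntegral_map hs (by fun_prop) hmeas,
    smul_eq_mul, ← lintegral_const_mul _ (by fun_prop)]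
  refine lintegral_congr fun x => ?_
  rw [← ENNReal.ofReal_mul (abs_nonneg _), hdet, add_sub_cancel_left, hquad]
  have : |A.det| ≠ 0 := abs_ne_zero.2 hA
  congr 1
  simp
  field_simp

lemma Matrix.PosDef.exists_eq_mul_transpose {d : ℕ} {S : Matrix (Fin d) (Fin d) ℝ}
    (hS : S.PosDef) : ∃ A : Matrix (Fin d) (Fin d) ℝ, A.det ≠ 0 ∧ S = A * Aᵀ := by
  obtain ⟨y, hy, rfl⟩ :=
    CStarAlgebra.isStrictlyPositive_iff_eq_star_mul_self.mp hS.isStrictlyPositive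
  refine ⟨yᵀ, ?_, ?_⟩
  · rw [det_transpose]
    exact ((isUnit_iff_isUnit_det y).1 hy).ne_zero
  · simp [star_eq_conjTranspose, conjTranspose_eq_transpose_of_trivial]

lemma isProbabilityMeasure_mvGaussian {d : ℕ} (μv : Fin d → ℝ)
    {S : Matrix (Fin d) (Fin d) ℝ} (hS : S.PosDef) :
    IsProbabilityMeasure (mvGaussian μv S) := by
  obtain ⟨A, hA, rfl⟩ := hS.exists_eq_mul_transpose
  rw [← map_mvGaussian_zero_one μv hA, mvGaussian_zero_one_eq_pi]
  exact Measure.isProbabilityMeasure_map (Measurable.aemeasurable (by fun_prop))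

/-- The characteristic function of a nondegenerate Gaussian vector. -/
lemma integral_cexp_mvGaussian {d : ℕ} (μv : Fin d → ℝ)
    {S : Matrix (Fin d) (Fin d) ℝ} (hS : S.PosDef) (t : Fin d → ℝ) :
    ∫ x, Complex.exp ((t ⬝ᵥ x : ℝ) * Complex.I) ∂mvGaussian μv S =
      Complex.exp ((t ⬝ᵥ μv : ℝ) * Complex.I - (t ⬝ᵥ S *ᵥ t : ℝ) / 2) := by
  have hstd (r : Fin d → ℝ) :
      ∫ x, Complex.exp ((r ⬝ᵥ x : ℝ) * Complex.I) ∂mvGaussian 0 1 =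
        Complex.exp (-(r ⬝ᵥ r : ℝ) / 2) := by
    have hone (a : ℝ) : ∫ x : ℝ, Complex.exp ((a * x : ℝ) * Complex.I) ∂gaussianReal 0 1 =
        Complex.exp (-(a * a : ℝ) / 2) := by
      have := charFun_gaussianReal (μ := 0) (v := 1) a
      rw [charFun_apply_real] at this
      simp only [Complex.ofReal_mul]
      rw [this]
      congr 1
      push_cast
      ring
    rw [mvGaussian_zero_one_eq_pi]
    simp_rw [dotProduct, Complex.ofReal_sum, Finset.sum_mul, Complex.exp_sum]
    rw [integral_fintype_prod_eq_prod
      (f := fun i x => Complex.exp ((r i * x : ℝ) * Complex.I))]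
    simp_rw [hone, ← Complex.exp_sum, ← Finset.sum_div, Finset.sum_neg_distrib]
  obtain ⟨A, hA, rfl⟩ := hS.exists_eq_mul_transpose
  rw [← map_mvGaussian_zero_one μv hA, integral_map (Measurable.aemeasurable (by fun_prop))
    (Continuous.aestronglyMeasurable (by fun_prop))]
  have hsplit (x : Fin d → ℝ) : Complex.exp ((t ⬝ᵥ (μv + A *ᵥ x) : ℝ) * Complex.I) =
      Complex.exp ((t ⬝ᵥ μv : ℝ) * Complex.I) *
        Complex.exp (((Aᵀ *ᵥ t) ⬝ᵥ x : ℝ) * Complex.I) := by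
    rw [← Complex.exp_add, dotProduct_add, dotProduct_mulVec, mulVec_transpose]
    congr 1
    push_cast
    ring
  simp_rw [hsplit]
  rw [integral_const_mul, hstd, ← Complex.exp_add, ← mulVec_mulVec, dotProduct_mulVec t A,
    ← mulVec_transpose]
  congr 1
  ring

lemma MeasureTheory.Measure.ext_of_integral_cexp_dotProduct {d : ℕ} {μ ν : Measure (Fin d → ℝ)}
    [IsFiniteMeasure μ] [IsFiniteMeasure ν]
    (h : ∀ t : Fin d → ℝ, ∫ x, Complex.exp ((t ⬝ᵥ x : ℝ) * Complex.I) ∂μ =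
      ∫ x, Complex.exp ((t ⬝ᵥ x : ℝ) * Complex.I) ∂ν) : μ = ν := by
  refine Measure.ext_of_charFunDual (funext fun L => ?_)
  have hL (x : Fin d → ℝ) : L x = (fun i => L (Pi.single i 1)) ⬝ᵥ x := by
    conv_lhs => rw [pi_eq_sum_univ' x]
    simp [dotProduct, mul_comm]
  have hfun : (fun x => Complex.exp (L x * Complex.I)) = fun x =>
      Complex.exp (((fun i => L (Pi.single i 1)) ⬝ᵥ x : ℝ) * Complex.I) :=
    funext fun x => by rw [← hL]
  rw [charFunDual_apply, charFunDual_apply, hfun]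
  exact h _

/-- An affine combination of two independent centred Gaussian vectors is Gaussian. -/
lemma map_prod_mvGaussian {m n d : ℕ} {S : Matrix (Fin m) (Fin m) ℝ} (hS : S.PosDef)
    {T : Matrix (Fin n) (Fin n) ℝ} (hT : T.PosDef) (b : Fin d → ℝ)
    (B : Matrix (Fin d) (Fin m) ℝ) (C : Matrix (Fin d) (Fin n) ℝ)
    (hpos : (B * S * Bᵀ + C * T * Cᵀ).PosDef) :
    ((mvGaussian 0 S).prod (mvGaussian 0 T)).map
        (fun ue : (Fin m → ℝ) × (Fin n → ℝ) => b + (B *ᵥ ue.1 + C *ᵥ ue.2)) =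
      mvGaussian b (B * S * Bᵀ + C * T * Cᵀ) := by
  have := isProbabilityMeasure_mvGaussian (0 : Fin m → ℝ) hS
  have := isProbabilityMeasure_mvGaussian (0 : Fin n → ℝ) hT
  have := isProbabilityMeasure_mvGaussian b hpos
  refine Measure.ext_of_integral_cexp_dotProduct fun t => ?_
  rw [integral_map (Measurable.aemeasurable (by fun_prop))
    (Continuous.aestronglyMeasurable (by fun_prop)), integral_cexp_mvGaussian b hpos]
  have hsplit (ue : (Fin m → ℝ) × (Fin n → ℝ)) :
      Complex.exp ((t ⬝ᵥ (b + (B *ᵥ ue.1 + C *ᵥ ue.2)) : ℝ) * Complex.I) =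
      Complex.exp ((t ⬝ᵥ b : ℝ) * Complex.I) *
        (Complex.exp (((Bᵀ *ᵥ t) ⬝ᵥ ue.1 : ℝ) * Complex.I) *
          Complex.exp (((Cᵀ *ᵥ t) ⬝ᵥ ue.2 : ℝ) * Complex.I)) := by
    simp only [← Complex.exp_add, dotProduct_add, dotProduct_mulVec, mulVec_transpose]
    congr 1
    push_cast
    ring
  have hquad {k : ℕ} (D : Matrix (Fin d) (Fin k) ℝ) (R : Matrix (Fin k) (Fin k) ℝ) :
      t ⬝ᵥ (D * R * Dᵀ) *ᵥ t = (Dᵀ *ᵥ t) ⬝ᵥ R *ᵥ (Dᵀ *ᵥ t) := by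
    rw [← mulVec_mulVec, ← mulVec_mulVec, dotProduct_mulVec t D, ← mulVec_transpose]
  simp_rw [hsplit]
  rw [integral_const_mul, integral_prod_mul
    (fun u : Fin m → ℝ => Complex.exp (((Bᵀ *ᵥ t) ⬝ᵥ u : ℝ) * Complex.I))
    (fun e : Fin n → ℝ => Complex.exp (((Cᵀ *ᵥ t) ⬝ᵥ e : ℝ) * Complex.I)),
    integral_cexp_mvGaussian 0 hS, integral_cexp_mvGaussian 0 hT, ← Complex.exp_add,
    ← Complex.exp_add, add_mulVec, dotProduct_add, hquad, hquad]
  congr 1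
  simp only [dotProduct_zero]
  push_cast
  ring

/-- The gain matrix `Ψ⁻¹ Vᵀ (V Ψ⁻¹ Vᵀ + 1)⁻¹` in its primal form. -/
lemma Matrix.PosDef.inv_mul_transpose_mul_inv {m n : ℕ} {Ψ : Matrix (Fin m) (Fin m) ℝ}
    (hΨ : Ψ.PosDef) (V : Matrix (Fin n) (Fin m) ℝ) :
    Ψ⁻¹ * Vᵀ * (V * Ψ⁻¹ * Vᵀ + 1)⁻¹ = (Vᵀ * V + Ψ)⁻¹ * Vᵀ := by
  have hM : (V * Ψ⁻¹ * Vᵀ + 1).PosDef :=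
    PosDef.posSemidef_add (by
      simpa [conjTranspose_eq_transpose_of_trivial] using
        hΨ.inv.posSemidef.mul_mul_conjTranspose_same V) PosDef.one
  have hQ : (Vᵀ * V + Ψ).PosDef :=
    PosDef.posSemidef_add (by
      simpa [conjTranspose_eq_transpose_of_trivial] using
        posSemidef_conjTranspose_mul_self V) hΨ
  have hMu := (isUnit_iff_isUnit_det _).1 hM.isUnit
  have hQu := (isUnit_iff_isUnit_det _).1 hQ.isUnit
  have hΨu := (isUnit_iff_isUnit_det _).1 hΨ.isUnit
  have key : (Vᵀ * V + Ψ) * (Ψ⁻¹ * Vᵀ) = Vᵀ * (V * Ψ⁻¹ * Vᵀ + 1) := by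
    simp [Matrix.add_mul, Matrix.mul_add, Matrix.mul_assoc, mul_nonsing_inv_cancel_left _ _ hΨu]
  rw [← nonsing_inv_mul_cancel_left _ (Ψ⁻¹ * Vᵀ) hQu, key, Matrix.mul_assoc,
    mul_nonsing_inv_cancel_right _ _ hMu]

theorem bhattacharya_sampler_correct (n m : ℕ)
    (Ψ : Matrix (Fin m) (Fin m) ℝ) (hΨ : Ψ.PosDef)
    (W : Matrix (Fin n) (Fin m) ℝ) (γ : ℝ) (hγ : 0 < γ) (Z : Fin n → ℝ) :
    Measure.map
      (fun ue : (Fin m → ℝ) × (Fin n → ℝ) =>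
        ue.1 + (Real.sqrt γ)⁻¹ •
          (Ψ⁻¹ *ᵥ (Wᵀ *ᵥ
            ((γ⁻¹ • (W * Ψ⁻¹ * Wᵀ) + 1)⁻¹ *ᵥ
              ((Real.sqrt γ)⁻¹ • Z - ((Real.sqrt γ)⁻¹ • (W *ᵥ ue.1) + ue.2))))))
      ((mvGaussian 0 Ψ⁻¹).prod (mvGaussian 0 1))
    = mvGaussian ((Wᵀ * W + γ • Ψ)⁻¹ *ᵥ (Wᵀ *ᵥ Z)) (γ • (Wᵀ * W + γ • Ψ)⁻¹) := by
  have hs : (√γ)⁻¹ * (√γ)⁻¹ = γ⁻¹ := by rw [← mul_inv, Real.mul_self_sqrt hγ.le]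
  set s := (√γ)⁻¹
  set V := s • W with hV
  set Q := Vᵀ * V + Ψ with hQdef
  have hQ : Q.PosDef :=
    PosDef.posSemidef_add (by
      simpa [conjTranspose_eq_transpose_of_trivial] using
        posSemidef_conjTranspose_mul_self V) hΨ
  have hQu := (isUnit_iff_isUnit_det _).1 hQ.isUnit
  have hΨu := (isUnit_iff_isUnit_det _).1 hΨ.isUnit
  have hQt : Qᵀ = Q := by
    simpa [conjTranspose_eq_transpose_of_trivial] using hQ.isHermitian.eq
  have hΨt : Ψᵀ = Ψ := by
    simpa [conjTranspose_eq_transpose_of_trivial] using hΨ.isHermitian.eq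
  have hM : γ⁻¹ • (W * Ψ⁻¹ * Wᵀ) + 1 = V * Ψ⁻¹ * Vᵀ + 1 := by
    simp [hV, smul_smul, hs]
  have hγQ : Wᵀ * W + γ • Ψ = γ • Q := by
    simp [hQdef, hV, smul_smul, hs, hγ.ne']
  have hinv : (Wᵀ * W + γ • Ψ)⁻¹ = γ⁻¹ • Q⁻¹ := by
    rw [hγQ]
    refine inv_eq_right_inv ?_
    simp [smul_smul, hγ.ne', mul_nonsing_inv _ hQu]
  have hB : 1 - Q⁻¹ * Vᵀ * V = Q⁻¹ * Ψ := by
    rw [sub_eq_iff_eq_add', Matrix.mul_assoc, ← Matrix.mul_add, ← hQdef, nonsing_inv_mul _ hQu]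
  have hcov : Q⁻¹ * Ψ * Ψ⁻¹ * (Q⁻¹ * Ψ)ᵀ + (-(Q⁻¹ * Vᵀ)) * (1 : Matrix (Fin n) (Fin n) ℝ) *
      (-(Q⁻¹ * Vᵀ))ᵀ = Q⁻¹ := by
    rw [mul_nonsing_inv_cancel_right _ _ hΨu]
    simp only [transpose_mul, transpose_neg, transpose_nonsing_inv, hQt, hΨt, transpose_transpose,
      Matrix.mul_one, Matrix.neg_mul, Matrix.mul_neg, neg_neg]
    rw [Matrix.mul_assoc Q⁻¹ Vᵀ, ← Matrix.mul_add, ← Matrix.mul_assoc Vᵀ, ← Matrix.add_mul,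
      add_comm Ψ, ← hQdef, mul_nonsing_inv _ hQu, Matrix.mul_one]
  have hfun : (fun ue : (Fin m → ℝ) × (Fin n → ℝ) =>
      ue.1 + s • (Ψ⁻¹ *ᵥ (Wᵀ *ᵥ ((γ⁻¹ • (W * Ψ⁻¹ * Wᵀ) + 1)⁻¹ *ᵥ
        (s • Z - (s • (W *ᵥ ue.1) + ue.2)))))) =
      fun ue => (Wᵀ * W + γ • Ψ)⁻¹ *ᵥ (Wᵀ *ᵥ Z) +
        ((Q⁻¹ * Ψ) *ᵥ ue.1 + (-(Q⁻¹ * Vᵀ)) *ᵥ ue.2) := by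
    funext ue
    have hgain (y : Fin n → ℝ) :
        s • (Ψ⁻¹ *ᵥ (Wᵀ *ᵥ ((γ⁻¹ • (W * Ψ⁻¹ * Wᵀ) + 1)⁻¹ *ᵥ y))) = (Q⁻¹ * Vᵀ) *ᵥ y := by
      rw [← hΨ.inv_mul_transpose_mul_inv V, hM]
      simp [hV, smul_mulVec, mulVec_mulVec, Matrix.mul_assoc]
    have hmean : (Wᵀ * W + γ • Ψ)⁻¹ *ᵥ (Wᵀ *ᵥ Z) = (Q⁻¹ * Vᵀ) *ᵥ (s • Z) := by
      rw [hinv]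
      simp [hV, smul_mulVec, mulVec_smul, mulVec_mulVec, smul_smul, hs]
    rw [hgain, hmean, ← hB, ← smul_mulVec, mulVec_sub, mulVec_add, sub_mulVec, one_mulVec,
      neg_mulVec, mulVec_mulVec]
    abel
  rw [hfun, map_prod_mvGaussian hΨ.inv PosDef.one _ _ _ (by rw [hcov]; exact hQ.inv), hcov, hinv,
    smul_smul, mul_inv_cancel₀ hγ.ne', one_smul]
end
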